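/- Let t ≥ 0 and let p_1, …, p_{t+1} be prime numbers, each not in {3, 11}, with p_i ≡ 3 (mod 4) for each i ∈ {1,…,t+1}. Then for every integer n ≥ 0 and every positive integer j not divisible by p_{t+1}, B_{11}^{(11)}(11·p_1^2⋯p_{t+1}^2·n + 11·(p_1^2⋯p_t^2·p_{t+1}·(5p_{t+1}+12j) − 5)/12) ≡ 0 (mod 11). -/

import Mathlib

/-!
Write `f = ∏ (1 - X^m)`, which is Mathlib's `PowerSeries.pentagonalSeries` by Euler's pentagonal
number theorem.

Reduction to `f¹⁰`. By Glaisher's theorem the generating function `G` of `11`-regular partitions is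
`∏ (1 + Y + ⋯ + Y¹⁰)` with `Y = X^m`, and `1 + Y + ⋯ + Y¹⁰ = (1 - Y)¹⁰` in characteristic `11`;
hence `G ≡ f¹⁰ (mod 11)`. The generating function of `B_{11}^{(11)}` is `G¹¹ ≡ G(X¹¹)`, so
`B_{11}^{(11)}(11N)` is congruent to the coefficient of `X^N` in `f¹⁰` (`B_eleven_mul`).

Vanishing of coefficients of `f¹⁰`. Over `ℤ` the coefficient of `X^N` in `f¹⁰` is zero unless
`24N + 10` is a sum of two squares (`coeff_pentagonalSeries_pow_ten`). To see this, let `χ` be the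
nontrivial character modulo `4`. Jacobi's identity for `f³` gives
`2 X³ f(X²⁴)³ = ∑ χ(a) a X^(3a²)` over the integers `a`. In the fourth power of this series the
weight is `abcd` times signs odd in each variable, so `6abcd` may be replaced by
`(a + c + d)³ (b + c - d)`, whose part odd in each variable is `6abcd`. The substitution
`u = a + c + d`, `v = b + c - d` turns `3(a² + b² + c² + d²)` into `u² + v² + 2y² + 2z²`; the sum
over `y, z` equals, up to a sign depending on `u, v` modulo `3`, the square of `X f(X²⁴)`.
Cancelling that square leaves `96 X¹⁰ f(X²⁴)¹⁰` as a sum of terms `± u³ v X^(u² + v²)`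
(`six_jacobiTheta_pow_eq`, `winquistTheta_eq`). Jacobi's identity itself is deduced from a finite
form of it, proved by induction (`sum_jacCoeff`, `jacCoeff_closed`, `pentagonalSeries_cube`).

Arithmetic. For the index `11N` of the theorem, `24N + 10 = 2 R² q (12qn + 5q + 12j)` where
`R = p₁⋯p_t` and `q = p_{t+1}`. As `q ∤ 12j`, the prime `q ≡ 3 (mod 4)` divides this number to an odd
power, so it is not a sum of two squares.
-/

/-- `B ℓ r n` is the number of `ℓ`-regular `r`-multipartitions of `n`:
ordered `r`-tuples `(λ⁽¹⁾, …, λ⁽ʳ⁾)` of partitions, none of whose parts is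
divisible by `ℓ`, whose sizes sum to `n`. -/
def B (ℓ r n : ℕ) : ℕ :=
  Fintype.card {f : Fin r → Σ a : Fin (n + 1), Nat.Partition a //
    (∑ i, ((f i).1 : ℕ)) = n ∧ ∀ i, ∀ part ∈ (f i).2.parts, ¬ ℓ ∣ part}

/-! ### Formal theta series -/

open PowerSeries

/-- The formal series `∑ᵢ w i · X ^ (e i)`. It is meaningful when `e` has finite fibres
(as ensured by `FinFib e`), so that each coefficient is a finite sum. -/
noncomputable def thetaSum {ι : Type*} (e : ι → ℕ) (w : ι → ℤ) : ℤ⟦X⟧ :=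
  open Classical in PowerSeries.mk fun n => ∑ᶠ i, if e i = n then w i else 0

/-- Every sublevel set of `e` is finite. -/
def FinFib {ι : Type*} (e : ι → ℕ) : Prop := ∀ n, {i | e i ≤ n}.Finite

lemma FinFib.prod {ι κ : Type*} {e₁ : ι → ℕ} {e₂ : κ → ℕ} (h₁ : FinFib e₁) (h₂ : FinFib e₂) :
    FinFib (fun p : ι × κ => e₁ p.1 + e₂ p.2) := by
  intro n
  refine ((h₁ n).prod (h₂ n)).subset ?_
  rintro ⟨i, k⟩ h
  simp only [Set.mem_ofPred_eq, Set.mem_prod] at h ⊢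
  omega

lemma FinFib.comp_inj {ι κ : Type*} {e : ι → ℕ} (h : FinFib e) {g : κ → ι}
    (hg : Function.Injective g) : FinFib (fun k => e (g k)) := fun n =>
  (h n).preimage hg.injOn

lemma coeff_thetaSum_of_subset {ι : Type*} {e : ι → ℕ} (w : ι → ℤ) {n : ℕ} {s : Finset ι}
    (hs : ∀ i, e i = n → i ∈ s) :
    coeff n (thetaSum e w) = ∑ i ∈ s, if e i = n then w i else 0 := by
  classical
  rw [thetaSum, coeff_mk, finsum_eq_sum_of_support_subset]
  · intro i hi
    simp only [Function.mem_support, ne_eq, ite_eq_right_iff, Classical.not_imp] at hi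
    exact hs i hi.1

lemma coeff_thetaSum {ι : Type*} {e : ι → ℕ} (he : FinFib e) (w : ι → ℤ) {n m : ℕ} (h : m ≤ n) :
    coeff m (thetaSum e w) = ∑ i ∈ (he n).toFinset, if e i = m then w i else 0 :=
  coeff_thetaSum_of_subset w fun i hi => by simp [hi, h]

lemma thetaSum_add {ι : Type*} {e : ι → ℕ} (he : FinFib e) (w w' : ι → ℤ) :
    thetaSum e (fun i => w i + w' i) = thetaSum e w + thetaSum e w' := by
  ext n
  rw [map_add, coeff_thetaSum he _ le_rfl, coeff_thetaSum he _ le_rfl, coeff_thetaSum he _ le_rfl,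
    ← Finset.sum_add_distrib]
  exact Finset.sum_congr rfl fun i _ => by split_ifs <;> simp

lemma thetaSum_smul {ι : Type*} {e : ι → ℕ} (he : FinFib e) (c : ℤ) (w : ι → ℤ) :
    thetaSum e (fun i => c * w i) = C c * thetaSum e w := by
  ext n
  rw [coeff_C_mul, coeff_thetaSum he _ le_rfl, coeff_thetaSum he _ le_rfl, Finset.mul_sum]
  exact Finset.sum_congr rfl fun i _ => by split_ifs <;> simp

lemma thetaSum_congr {ι : Type*} {e e' : ι → ℕ} {w w' : ι → ℤ} (he : ∀ i, e i = e' i)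
    (hw : ∀ i, w i = w' i) : thetaSum e w = thetaSum e' w' := by
  rw [funext he, funext hw]

lemma thetaSum_zero {ι : Type*} {e : ι → ℕ} : thetaSum e (fun _ => 0) = 0 := by
  ext n
  simp [thetaSum]

/-- Pulling back along an injection whose range contains the support of the weight. -/
lemma thetaSum_comp_inj {ι κ : Type*} (e : ι → ℕ) (w : ι → ℤ) (g : κ → ι)
    (hg : Function.Injective g) (hw : ∀ i, w i ≠ 0 → i ∈ Set.range g) :
    thetaSum e w = thetaSum (fun k => e (g k)) (fun k => w (g k)) := by
  classical
  ext n
  simp only [thetaSum, coeff_mk]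
  rw [← finsum_mem_univ (f := fun k => if e (g k) = n then w (g k) else 0),
    ← finsum_mem_image (g := g) (f := fun i => if e i = n then w i else 0) hg.injOn,
    Set.image_univ, finsum_mem_def]
  refine finsum_congr fun i => ?_
  by_cases hi : w i = 0
  · simp [hi, Set.indicator]
  · rw [Set.indicator_of_mem (hw i hi)]

/-- An exponent-preserving involution that negates the weight forces the series to vanish. -/
lemma thetaSum_eq_zero_of_odd {ι : Type*} {e : ι → ℕ} (he : FinFib e) (w : ι → ℤ) (σ : ι → ι)
    (hσ : Function.Involutive σ) (h : ∀ i, e (σ i) = e i) (hw : ∀ i, w (σ i) = - w i) :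
    thetaSum e w = 0 := by
  have h1 := thetaSum_comp_inj e w σ hσ.injective fun i _ => ⟨σ i, hσ i⟩
  have h2 : thetaSum (fun k => e (σ k)) (fun k => w (σ k)) = C (-1) * thetaSum e w := by
    rw [← thetaSum_smul he]
    exact thetaSum_congr h fun i => by rw [hw]; ring
  rw [h2] at h1
  ext n
  have := congrArg (coeff n) h1
  rw [coeff_C_mul] at this
  simp only [map_zero]
  omega

/-- Summation over the second variable first: if every inner sum is a multiple `h i` of one fixed
series `S`, the double sum factors through `S`. -/
lemma thetaSum_fiber {ι κ : Type*} {e₁ : ι → ℕ} {e₂ : κ → ℕ} (h₁ : FinFib e₁) (h₂ : FinFib e₂)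
    (w₁ : ι → ℤ) (w₂ : ι → κ → ℤ) (h : ι → ℤ) (S : ℤ⟦X⟧)
    (hS : ∀ i, w₁ i ≠ 0 → thetaSum e₂ (w₂ i) = C (h i) * S) :
    thetaSum (fun p : ι × κ => e₁ p.1 + e₂ p.2) (fun p => w₁ p.1 * w₂ p.1 p.2) =
      thetaSum e₁ (fun i => w₁ i * h i) * S := by
  ext n
  rw [coeff_mul, coeff_thetaSum_of_subset (s := (h₁ n).toFinset ×ˢ (h₂ n).toFinset)]
  swap
  · rintro ⟨i, k⟩ hik
    simp only [Finset.mem_product, Set.Finite.mem_toFinset, Set.mem_ofPred_eq] at hik ⊢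
    omega
  have key : ∀ pq ∈ Finset.HasAntidiagonal.antidiagonal n,
      coeff pq.1 (thetaSum e₁ (fun i => w₁ i * h i)) * coeff pq.2 S =
      ∑ i ∈ (h₁ n).toFinset, ∑ k ∈ (h₂ n).toFinset,
        if e₁ i = pq.1 ∧ e₂ k = pq.2 then w₁ i * w₂ i k else 0 := by
    rintro ⟨a, b⟩ hab
    have hab' : a + b = n := by simpa using hab
    rw [coeff_thetaSum h₁ _ (show a ≤ n by omega), Finset.sum_mul]
    refine Finset.sum_congr rfl fun i _ => ?_
    by_cases hi : e₁ i = a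
    · by_cases hwi : w₁ i = 0
      · simp [hwi]
      have h3 := congrArg (coeff b) (hS i hwi)
      rw [coeff_C_mul, coeff_thetaSum h₂ _ (show b ≤ n by omega)] at h3
      rw [if_pos hi, mul_assoc, ← h3, Finset.mul_sum]
      exact Finset.sum_congr rfl fun k _ => by simp [hi]
    · simp [hi]
  rw [Finset.sum_congr rfl key, Finset.sum_comm, Finset.sum_product]
  refine Finset.sum_congr rfl fun i _ => ?_
  rw [Finset.sum_comm]
  refine Finset.sum_congr rfl fun k _ => ?_
  simp only
  by_cases hik : e₁ i + e₂ k = n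
  · rw [if_pos hik, Finset.sum_eq_single (e₁ i, e₂ k)]
    · simp
    · rintro ⟨a, b⟩ _ hne
      refine if_neg fun hh => hne ?_
      simp [hh.1, hh.2]
    · intro hh
      simp [hik] at hh
  · rw [if_neg hik, Finset.sum_eq_zero]
    rintro ⟨a, b⟩ hab
    refine if_neg fun hh => hik ?_
    simp only at hh
    rw [hh.1, hh.2]
    simpa using hab

lemma thetaSum_mul {ι κ : Type*} {e₁ : ι → ℕ} {e₂ : κ → ℕ} (h₁ : FinFib e₁) (h₂ : FinFib e₂)
    (w₁ : ι → ℤ) (w₂ : κ → ℤ) :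
    thetaSum e₁ w₁ * thetaSum e₂ w₂ =
      thetaSum (fun p : ι × κ => e₁ p.1 + e₂ p.2) (fun p => w₁ p.1 * w₂ p.2) := by
  rw [thetaSum_fiber h₁ h₂ w₁ (fun _ => w₂) (fun _ => 1) (thetaSum e₂ w₂) (by simp)]
  simp

/-- The substitution `X ↦ X ^ m` followed by multiplication by `X ^ r`. -/
lemma X_pow_mul_expand_thetaSum {ι : Type*} {e : ι → ℕ} (he : FinFib e) (w : ι → ℤ) {m : ℕ}
    (hm : m ≠ 0) (r : ℕ) :
    X ^ r * expand m hm (thetaSum e w) = thetaSum (fun i => m * e i + r) w := by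
  ext n
  rw [coeff_X_pow_mul', coeff_thetaSum_of_subset (s := (he n).toFinset)]
  swap
  · intro i hi
    simp only [Set.Finite.mem_toFinset, Set.mem_ofPred_eq]
    have : e i ≤ m * e i := Nat.le_mul_of_pos_left _ (Nat.pos_of_ne_zero hm)
    omega
  split_ifs with hr
  · rw [coeff_expand]
    split_ifs with hd
    · rw [coeff_thetaSum he _ (show (n - r) / m ≤ n from (Nat.div_le_self _ _).trans (by omega))]
      refine Finset.sum_congr rfl fun i _ => ?_
      congr 1
      rw [eq_comm (a := e i), Nat.div_eq_iff_eq_mul_right (Nat.pos_of_ne_zero hm) hd]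
      apply propext
      omega
    · refine (Finset.sum_eq_zero fun i _ => if_neg fun hi => hd ⟨e i, ?_⟩).symm
      omega
  · exact (Finset.sum_eq_zero fun i _ => if_neg fun hi => hr (by omega)).symm

/-! ### A two-variable theta identity -/

/-- The nontrivial Dirichlet character modulo `4`, as an explicit integer-valued function. -/
def chi (a : ℤ) : ℤ := if a % 4 = 1 then 1 else if a % 4 = 3 then -1 else 0

lemma chi_neg (a : ℤ) : chi (-a) = - chi a := by
  unfold chi
  split_ifs <;> omega

/-- The exponent `a ↦ c a²`. -/
def sqe (c : ℕ) (a : ℤ) : ℕ := c * a.natAbs ^ 2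

lemma cast_sqe (c : ℕ) (a : ℤ) : (sqe c a : ℤ) = c * a ^ 2 := by
  simp [sqe]

lemma sqe_neg (c : ℕ) (a : ℤ) : sqe c (-a) = sqe c a := by simp [sqe]

lemma finFib_sqe {c : ℕ} (hc : c ≠ 0) : FinFib (sqe c) := by
  intro n
  refine (Set.finite_Icc (-(n : ℤ)) n).subset fun a ha => ?_
  have h1 : a.natAbs ^ 2 ≤ n := (Nat.le_mul_of_pos_left _ (Nat.pos_of_ne_zero hc)).trans ha
  have h2 : a.natAbs ≤ n := (Nat.le_self_pow two_ne_zero _).trans h1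
  simp only [Set.mem_Icc]
  omega

/-- `∑ χ(a) a X^(3a²)`, which is `2 X³ f(X²⁴)³` by Jacobi's identity. -/
noncomputable def jacobiTheta3 : ℤ⟦X⟧ := thetaSum (sqe 3) (fun a => chi a * a)

/-- `∑ (-1)^m X^((6m-1)²)`, which is `X f(X²⁴)` by Euler's pentagonal number theorem. -/
noncomputable def eulerTheta : ℤ⟦X⟧ :=
  thetaSum (fun m : ℤ => sqe 1 (6 * m - 1)) (fun m => if m % 2 = 0 then 1 else -1)

/-- The sign attached to the residues modulo `3` of a pair: `1` if only the second entry is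
divisible by `3`, `-1` if only the first is, and `0` otherwise. -/
def hsgn (u v : ℤ) : ℤ :=
  if u % 3 ≠ 0 ∧ v % 3 = 0 then 1 else if u % 3 = 0 ∧ v % 3 ≠ 0 then -1 else 0

/-- The sign attached to the parities of a pair: `1` for (odd, even), `-1` for (even, odd), and
`0` for equal parities. -/
def psgn (y z : ℤ) : ℤ :=
  if y % 2 = 1 ∧ z % 2 = 0 then 1 else if y % 2 = 0 ∧ z % 2 = 1 then -1 else 0

/-- The two-variable theta series that turns out to equal `96 X¹⁰ f(X²⁴)¹⁰`. -/
noncomputable def winquistTheta : ℤ⟦X⟧ :=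
  thetaSum (fun p : ℤ × ℤ => sqe 1 p.1 + sqe 1 p.2)
    (fun p => chi p.1 * chi p.2 * p.1 ^ 3 * p.2 * hsgn p.1 p.2)

/-- The weight `psgn y z` restricted to `y ≡ u`, `z ≡ v (mod 3)`. -/
def innerWeight (u v : ℤ) (p : ℤ × ℤ) : ℤ :=
  if p.1 % 3 = u % 3 ∧ p.2 % 3 = v % 3 then psgn p.1 p.2 else 0

lemma finFib_pair {c : ℕ} (hc : c ≠ 0) : FinFib (fun p : ℤ × ℤ => sqe c p.1 + sqe c p.2) :=
  (finFib_sqe hc).prod (finFib_sqe hc)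

lemma eulerTheta_sq :
    thetaSum (fun p : ℤ × ℤ => sqe 2 p.1 + sqe 2 p.2) (innerWeight 2 0) = eulerTheta * eulerTheta := by
  have hf : FinFib (fun m : ℤ => sqe 1 (6 * m - 1)) :=
    (finFib_sqe one_ne_zero).comp_inj (g := fun m : ℤ => 6 * m - 1) fun a b h => by
      simp only at h; omega
  rw [eulerTheta, thetaSum_mul hf hf,
    thetaSum_comp_inj _ _ (fun p : ℤ × ℤ => (3 * (p.1 + p.2) - 1, 3 * (p.1 - p.2)))]
  · refine thetaSum_congr ?_ ?_
    · rintro ⟨m, n⟩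
      zify
      simp only [cast_sqe]
      push_cast
      ring
    · rintro ⟨m, n⟩
      have h : ∀ s : ℤ, (3 * s - 1) % 3 = 2 % 3 := by intro s; omega
      have h' : ∀ s : ℤ, (3 * s) % 3 = 0 % 3 := by intro s; omega
      simp only [innerWeight, h, h', psgn]
      rcases Int.emod_two_eq_zero_or_one m with h1 | h1 <;>
      rcases Int.emod_two_eq_zero_or_one n with h2 | h2 <;> simp [h1, h2] <;> omega
  · rintro ⟨a, b⟩ ⟨c, d⟩ h
    simp only [Prod.mk.injEq] at h ⊢
    omega
  · rintro ⟨y, z⟩ h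
    have h1 : y % 3 = 2 ∧ z % 3 = 0 ∧ y % 2 ≠ z % 2 := by
      simp only [innerWeight, psgn] at h
      split_ifs at h <;> omega
    refine ⟨((y + 1 + z) / 6, (y + 1 - z) / 6), ?_⟩
    simp only [Prod.mk.injEq]
    omega

/-- The inner sum depends on `(u, v)` only through the sign `hsgn`: reflecting `y` and `z` reduces
to residues `0` and `2`, and swapping `y` with `z` changes the sign. -/
lemma inner_eq (u v : ℤ) :
    thetaSum (fun p : ℤ × ℤ => sqe 2 p.1 + sqe 2 p.2) (innerWeight u v) =
      C (hsgn u v) * (eulerTheta * eulerTheta) := by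
  have hF := finFib_pair (c := 2) two_ne_zero
  have hred : ∀ u v : ℤ, innerWeight u v = innerWeight (u % 3) (v % 3) := by
    intro u v; funext p; simp [innerWeight]
  have hsred : ∀ u v : ℤ, hsgn u v = hsgn (u % 3) (v % 3) := by
    intro u v; simp [hsgn]
  have hn1 : ∀ u v : ℤ,
      thetaSum (fun p : ℤ × ℤ => sqe 2 p.1 + sqe 2 p.2) (innerWeight u v) =
      thetaSum (fun p : ℤ × ℤ => sqe 2 p.1 + sqe 2 p.2) (innerWeight (-u) v) := by
    intro u v
    rw [thetaSum_comp_inj _ _ (fun p : ℤ × ℤ => (-p.1, p.2))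
      (fun a b h => by simpa [Prod.ext_iff] using h) (fun i _ => ⟨(-i.1, i.2), by simp⟩)]
    refine thetaSum_congr (fun p => by simp [sqe_neg]) ?_
    rintro ⟨y, z⟩
    simp only [innerWeight, psgn]
    split_ifs <;> omega
  have hsw : ∀ u v : ℤ,
      thetaSum (fun p : ℤ × ℤ => sqe 2 p.1 + sqe 2 p.2) (innerWeight u v) =
      C (-1) * thetaSum (fun p : ℤ × ℤ => sqe 2 p.1 + sqe 2 p.2) (innerWeight v u) := by
    intro u v
    rw [thetaSum_comp_inj _ _ Prod.swap Prod.swap_injective (fun i _ => ⟨i.swap, by simp⟩),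
      ← thetaSum_smul hF]
    refine thetaSum_congr (fun p => by simp [add_comm]) ?_
    rintro ⟨y, z⟩
    simp only [innerWeight, psgn, Prod.swap]
    split_ifs <;> omega
  have hself : ∀ u : ℤ,
      thetaSum (fun p : ℤ × ℤ => sqe 2 p.1 + sqe 2 p.2) (innerWeight u u) = 0 := by
    intro u
    refine thetaSum_eq_zero_of_odd hF _ Prod.swap Prod.swap_swap (fun p => by simp [add_comm]) ?_
    rintro ⟨y, z⟩
    simp only [innerWeight, psgn, Prod.swap]
    split_ifs <;> omega
  have hn2 : ∀ u v : ℤ,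
      thetaSum (fun p : ℤ × ℤ => sqe 2 p.1 + sqe 2 p.2) (innerWeight u v) =
      thetaSum (fun p : ℤ × ℤ => sqe 2 p.1 + sqe 2 p.2) (innerWeight u (-v)) := by
    intro u v
    rw [hsw, hn1, ← hsw]
  have e20 := eulerTheta_sq
  have e02 := hsw 0 2
  rw [e20] at e02
  have e10 : thetaSum (fun p : ℤ × ℤ => sqe 2 p.1 + sqe 2 p.2) (innerWeight 1 0) =
      eulerTheta * eulerTheta := by
    rw [hn1, hred]; exact e20
  have e01 := hsw 0 1
  rw [e10] at e01
  have e12 : thetaSum (fun p : ℤ × ℤ => sqe 2 p.1 + sqe 2 p.2) (innerWeight 1 2) = 0 := by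
    rw [hn2, hred]; exact hself 1
  have e21 := hsw 2 1
  rw [e12] at e21
  rw [hred, hsred]
  have hu : u % 3 = 0 ∨ u % 3 = 1 ∨ u % 3 = 2 := by omega
  have hv : v % 3 = 0 ∨ v % 3 = 1 ∨ v % 3 = 2 := by omega
  rcases hu with hu | hu | hu <;> rcases hv with hv | hv | hv <;> rw [hu, hv] <;>
    simp [hsgn, hself, e20, e02, e10, e01, e12, e21]

/-- The exponent `3(a² + b² + c² + d²)`, on quadruples nested as pairs. -/
def quadExp (p : (ℤ × ℤ) × (ℤ × ℤ)) : ℕ :=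
  (sqe 3 p.1.1 + sqe 3 p.1.2) + (sqe 3 p.2.1 + sqe 3 p.2.2)

/-- The product `χ(a) χ(b) χ(c) χ(d)`. -/
def quadChi (p : (ℤ × ℤ) × (ℤ × ℤ)) : ℤ :=
  (chi p.1.1 * chi p.1.2) * (chi p.2.1 * chi p.2.2)

lemma finFib_quadExp : FinFib quadExp :=
  (finFib_pair three_ne_zero).prod (finFib_pair three_ne_zero)

/-- Only the part of `(a + c + d)³ (b + c - d)` odd in each variable contributes, namely
`6abcd`. -/
lemma six_jacobiTheta_pow :
    C 6 * jacobiTheta3 ^ 4 = thetaSum quadExp (fun p => quadChi p *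
      ((p.1.1 + p.2.1 + p.2.2) ^ 3 * (p.1.2 + p.2.1 - p.2.2))) := by
  have hF := finFib_quadExp
  have h3 := finFib_sqe (c := 3) three_ne_zero
  have h33 := finFib_pair (c := 3) three_ne_zero
  have hJ : jacobiTheta3 ^ 4 = thetaSum quadExp (fun p => quadChi p *
      (p.1.1 * p.1.2 * p.2.1 * p.2.2)) := by
    rw [show jacobiTheta3 ^ 4 = (jacobiTheta3 * jacobiTheta3) * (jacobiTheta3 * jacobiTheta3) by
      ring, jacobiTheta3, thetaSum_mul h3 h3, thetaSum_mul h33 h33]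
    refine thetaSum_congr (fun _ => rfl) fun p => ?_
    simp only [quadChi]
    ring
  have hb : thetaSum quadExp (fun p => quadChi p *
      ((p.1.1 + p.2.1 + p.2.2) ^ 3 * (p.2.1 - p.2.2))) = 0 := by
    refine thetaSum_eq_zero_of_odd hF _ (fun p => ((p.1.1, -p.1.2), p.2)) (fun p => by simp)
      (fun p => by simp [quadExp, sqe_neg]) fun p => ?_
    simp only [quadChi, chi_neg]
    ring
  have ha : thetaSum quadExp (fun p => quadChi p *
      (p.1.2 * (3 * p.1.1 ^ 2 * (p.2.1 + p.2.2) + (p.2.1 + p.2.2) ^ 3))) = 0 := by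
    refine thetaSum_eq_zero_of_odd hF _ (fun p => ((-p.1.1, p.1.2), p.2)) (fun p => by simp)
      (fun p => by simp [quadExp, sqe_neg]) fun p => ?_
    simp only [quadChi, chi_neg]
    ring
  have hc : thetaSum quadExp (fun p => quadChi p *
      (p.1.2 * (p.1.1 ^ 3 + 3 * p.1.1 * p.2.1 ^ 2 + 3 * p.1.1 * p.2.2 ^ 2))) = 0 := by
    refine thetaSum_eq_zero_of_odd hF _ (fun p => (p.1, (-p.2.1, p.2.2))) (fun p => by simp)
      (fun p => by simp [quadExp, sqe_neg]) fun p => ?_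
    simp only [quadChi, chi_neg]
    ring
  rw [hJ, ← thetaSum_smul hF]
  rw [← add_zero (thetaSum _ _), ← hb, ← thetaSum_add hF, ← add_zero (thetaSum _ _), ← ha,
    ← thetaSum_add hF, ← add_zero (thetaSum _ _), ← hc, ← thetaSum_add hF]
  exact thetaSum_congr (fun _ => rfl) fun p => by ring

/-- Value of `χ(a)χ(b)χ(c)χ(d)` after the substitution `(a, b, c, d) =
(u + 2i, v + 2j, -i - j, j - i)`. -/
lemma chi_subst (u v i j : ℤ) :
    (chi (u + 2 * i) * chi (v + 2 * j)) * (chi (-i - j) * chi (j - i)) =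
      chi u * chi v * psgn (u + 3 * i) (v + 3 * j) := by
  have hc : ∀ a b : ℤ, a % 4 = b % 4 → chi a = chi b := by
    intro a b h; simp [chi, h]
  have hp : ∀ a b a' b' : ℤ, a % 4 = a' % 4 → b % 4 = b' % 4 → psgn a b = psgn a' b' := by
    intro a b a' b' h h'
    have h1 : a % 2 = a' % 2 := by omega
    have h2 : b % 2 = b' % 2 := by omega
    simp [psgn, h1, h2]
  have red : ∀ u' v' i' j' : ℤ, u % 4 = u' % 4 → v % 4 = v' % 4 → i % 4 = i' % 4 → j % 4 = j' % 4 →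
      (chi (u' + 2 * i') * chi (v' + 2 * j')) * (chi (-i' - j') * chi (j' - i')) =
      chi u' * chi v' * psgn (u' + 3 * i') (v' + 3 * j') →
      (chi (u + 2 * i) * chi (v + 2 * j)) * (chi (-i - j) * chi (j - i)) =
      chi u * chi v * psgn (u + 3 * i) (v + 3 * j) := by
    intro u' v' i' j' h1 h2 h3 h4 h
    rw [hc u u' h1, hc v v' h2, hc (u + 2 * i) (u' + 2 * i') (by omega),
      hc (v + 2 * j) (v' + 2 * j') (by omega), hc (-i - j) (-i' - j') (by omega),
      hc (j - i) (j' - i') (by omega),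
      hp (u + 3 * i) (v + 3 * j) (u' + 3 * i') (v' + 3 * j') (by omega) (by omega), h]
  have fin : ∀ u' v' i' j' : Fin 4,
      (chi ((u' : ℕ) + 2 * (i' : ℕ)) * chi ((v' : ℕ) + 2 * (j' : ℕ))) *
        (chi (-(i' : ℕ) - (j' : ℕ)) * chi ((j' : ℕ) - (i' : ℕ))) =
      chi (u' : ℕ) * chi (v' : ℕ) * psgn ((u' : ℕ) + 3 * (i' : ℕ)) ((v' : ℕ) + 3 * (j' : ℕ)) := by
    decide
  have ex : ∀ a : ℤ, ∃ a' : Fin 4, a % 4 = ((a' : ℕ) : ℤ) % 4 := fun a =>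
    ⟨⟨(a % 4).toNat, by omega⟩, by simp only; omega⟩
  obtain ⟨u', hu'⟩ := ex u
  obtain ⟨v', hv'⟩ := ex v
  obtain ⟨i', hi'⟩ := ex i
  obtain ⟨j', hj'⟩ := ex j
  exact red _ _ _ _ hu' hv' hi' hj' (fin u' v' i' j')

/-- The substitution `(a, b, c, d) = (u + 2i, v + 2j, -i - j, j - i)`, under which
`3(a² + b² + c² + d²) = u² + v² + 2(u + 3i)² + 2(v + 3j)²`, separates the quadruple sum. -/
theorem six_jacobiTheta_pow_eq :
    C 6 * jacobiTheta3 ^ 4 = winquistTheta * (eulerTheta * eulerTheta) := by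
  rw [six_jacobiTheta_pow, winquistTheta,
    ← thetaSum_fiber (finFib_pair one_ne_zero) (finFib_pair two_ne_zero)
      (fun p => chi p.1 * chi p.2 * p.1 ^ 3 * p.2) (fun p => innerWeight p.1 p.2)
      (fun p => hsgn p.1 p.2) _ (fun p _ => inner_eq p.1 p.2),
    thetaSum_comp_inj _ _ (fun p : (ℤ × ℤ) × (ℤ × ℤ) =>
      ((p.1.1 + 2 * p.2.1, p.1.2 + 2 * p.2.2), (-p.2.1 - p.2.2, p.2.2 - p.2.1))),
    eq_comm, thetaSum_comp_inj _ _ (fun p : (ℤ × ℤ) × (ℤ × ℤ) =>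
      (p.1, (p.1.1 + 3 * p.2.1, p.1.2 + 3 * p.2.2)))]
  · refine thetaSum_congr ?_ ?_
    · rintro ⟨⟨u, v⟩, i, j⟩
      zify
      simp only [quadExp]
      push_cast
      simp only [cast_sqe]
      push_cast
      ring
    · rintro ⟨⟨u, v⟩, i, j⟩
      simp only [quadChi, chi_subst]
      have h : innerWeight u v (u + 3 * i, v + 3 * j) = psgn (u + 3 * i) (v + 3 * j) := by
        refine if_pos ⟨?_, ?_⟩ <;> simp only <;> omega
      rw [h]
      ring
  · rintro ⟨⟨a, b⟩, c, d⟩ ⟨⟨a', b'⟩, c', d'⟩ h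
    simp only [Prod.mk.injEq] at h ⊢
    omega
  · rintro ⟨⟨u, v⟩, y, z⟩ h
    have h1 : y % 3 = u % 3 ∧ z % 3 = v % 3 := by
      by_contra hn
      exact h (by simp [innerWeight, hn])
    refine ⟨((u, v), ((y - u) / 3, (z - v) / 3)), ?_⟩
    simp only [Prod.mk.injEq, true_and]
    omega
  · rintro ⟨⟨a, b⟩, c, d⟩ ⟨⟨a', b'⟩, c', d'⟩ h
    simp only [Prod.mk.injEq] at h ⊢
    omega
  · rintro ⟨⟨a, b⟩, c, d⟩ h
    have h1 : c % 2 = 1 ∧ d % 2 = 1 := by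
      have hc : chi c ≠ 0 := fun hc => h (by simp [quadChi, hc])
      have hd : chi d ≠ 0 := fun hd => h (by simp [quadChi, hd])
      unfold chi at hc hd
      split_ifs at hc hd <;> omega
    refine ⟨((a + (c + d), b + (c - d)), (-((c + d) / 2), (d - c) / 2)), ?_⟩
    simp only [Prod.mk.injEq]
    omega

/-! ### Jacobi's identity for the cube of the Euler product -/

/-- The finite product `(1 - X)(1 - X²)⋯(1 - Xⁿ)`. -/
noncomputable def eulerProd (n : ℕ) : ℤ⟦X⟧ := ∏ i ∈ Finset.range n, (1 - X ^ (i + 1))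

lemma eulerProd_succ (n : ℕ) : eulerProd (n + 1) = eulerProd n * (1 - X ^ (n + 1)) :=
  Finset.prod_range_succ _ _

lemma isUnit_eulerProd (n : ℕ) : IsUnit (eulerProd n) := by
  rw [PowerSeries.isUnit_iff_constantCoeff, eulerProd, map_prod]
  simp

/-- The signed power `(-1)^k X^(k(k+1)/2)`, defined recursively. -/
noncomputable def triTerm : ℕ → ℤ⟦X⟧
  | 0 => 1
  | k + 1 => -X ^ (k + 1) * triTerm k

lemma triTerm_eq (k : ℕ) : triTerm k = C ((-1) ^ k) * X ^ (k * (k + 1) / 2) := by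
  induction k with
  | zero => simp [triTerm]
  | succ k ih =>
    have h : (k + 1) * (k + 1 + 1) / 2 = (k + 1) + k * (k + 1) / 2 := by
      rw [show (k + 1) * (k + 1 + 1) = k * (k + 1) + (k + 1) * 2 by ring,
        Nat.add_mul_div_right _ _ two_pos, add_comm]
    rw [triTerm, ih, h, pow_add, pow_succ (-1 : ℤ)]
    simp only [map_mul, map_neg, map_one]
    ring

lemma X_pow_dvd_triTerm (k : ℕ) : X ^ k ∣ triTerm k := by
  cases k with
  | zero => simp
  | succ k => exact Dvd.dvd.mul_right (by simp) _

/-- The coefficients `(-1)^k X^(k(k+1)/2) [2n+1 choose n-k]_X` of the finite form of Jacobi's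
identity, defined by the recurrence in `n` that multiplication by `(1 - X^(n+1))²` induces. -/
noncomputable def jacCoeff : ℕ → ℕ → ℤ⟦X⟧
  | 0, k => if k = 0 then 1 else 0
  | n + 1, 0 => (1 + X ^ (n + 1) + X ^ (2 * n + 2)) * jacCoeff n 0 - X ^ (n + 1) * jacCoeff n 1
  | n + 1, k + 1 => (1 + X ^ (2 * n + 2)) * jacCoeff n (k + 1) -
      X ^ (n + 1) * (jacCoeff n k + jacCoeff n (k + 2))

lemma jacCoeff_of_lt : ∀ {n k : ℕ}, n < k → jacCoeff n k = 0
  | 0, k, h => by simp [jacCoeff, h.ne']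
  | n + 1, 0, h => by omega
  | n + 1, k + 1, h => by
    rw [jacCoeff, jacCoeff_of_lt (show n < k + 1 by omega), jacCoeff_of_lt (show n < k by omega),
      jacCoeff_of_lt (show n < k + 2 by omega)]
    simp

/-- Summation by parts for the recurrence of `jacCoeff`, with the boundary terms at `N`. -/
lemma sum_shift (c : ℕ → ℤ⟦X⟧) (N : ℕ) :
    ∑ k ∈ Finset.range N, (2 * (k : ℤ⟦X⟧) + 3) * (c k + c (k + 2)) + c 1 - c 0 =
      2 * ∑ k ∈ Finset.range N, (2 * (k : ℤ⟦X⟧) + 1) * c k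
        + (2 * (N : ℤ⟦X⟧) + 1) * c (N + 1) + (2 * (N : ℤ⟦X⟧) - 1) * c N := by
  induction N with
  | zero => simp [sub_eq_add_neg]
  | succ N ih =>
    rw [Finset.sum_range_succ, Finset.sum_range_succ]
    push_cast
    linear_combination ih

/-- A finite form of Jacobi's identity. -/
lemma sum_jacCoeff (n : ℕ) :
    ∑ k ∈ Finset.range (n + 1), (2 * (k : ℤ⟦X⟧) + 1) * jacCoeff n k = eulerProd n ^ 2 := by
  induction n with
  | zero => simp [jacCoeff, eulerProd]
  | succ n ih =>
    have h := sum_shift (jacCoeff n) (n + 1)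
    rw [jacCoeff_of_lt (show n < n + 1 + 1 by omega),
      jacCoeff_of_lt (show n < n + 1 by omega), ih] at h
    have h2 : ∑ k ∈ Finset.range (n + 1), (2 * (k : ℤ⟦X⟧) + 3) * jacCoeff n (k + 1) +
        jacCoeff n 0 = eulerProd n ^ 2 := by
      have h3 := Finset.sum_range_succ (fun k : ℕ => (2 * (k : ℤ⟦X⟧) + 1) * jacCoeff n k) (n + 1)
      rw [ih, Finset.sum_range_succ', jacCoeff_of_lt (show n < n + 1 by omega)] at h3
      push_cast at h3
      simp only [mul_zero, add_zero, zero_add, one_mul] at h3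
      rw [← h3]
      congr 1
      exact Finset.sum_congr rfl fun k _ => by ring
    rw [Finset.sum_range_succ', eulerProd_succ]
    have h4 : ∀ k : ℕ, (2 * ((k + 1 : ℕ) : ℤ⟦X⟧) + 1) * jacCoeff (n + 1) (k + 1) =
        (1 + X ^ (2 * n + 2)) * ((2 * (k : ℤ⟦X⟧) + 3) * jacCoeff n (k + 1)) -
        X ^ (n + 1) * ((2 * (k : ℤ⟦X⟧) + 3) * (jacCoeff n k + jacCoeff n (k + 2))) := by
      intro k
      rw [jacCoeff]
      push_cast
      ring
    rw [Finset.sum_congr rfl fun k _ => h4 k, Finset.sum_sub_distrib, ← Finset.mul_sum,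
      ← Finset.mul_sum, jacCoeff]
    push_cast
    linear_combination (1 + X ^ (2 * n + 2)) * h2 - X ^ (n + 1) * h

/-- Closed form of `jacCoeff`, with the denominators cleared. -/
lemma jacCoeff_closed (n : ℕ) : ∀ k m : ℕ, k + m = n →
    eulerProd m * eulerProd (2 * k + m + 1) * jacCoeff n k =
      triTerm k * eulerProd (2 * n + 1) := by
  induction n with
  | zero =>
    intro k m h
    obtain ⟨rfl, rfl⟩ : k = 0 ∧ m = 0 := by omega
    simp [jacCoeff, triTerm, eulerProd]
  | succ n ih =>
    -- the same formula multiplied by one more factor, which remains true at `k = n + 1`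
    have ih' : ∀ k m : ℕ, k + m = n + 1 →
        eulerProd m * eulerProd (2 * k + m) * jacCoeff n k =
          (1 - X ^ m) * triTerm k * eulerProd (2 * n + 1) := by
      intro k m h
      cases m with
      | zero => rw [jacCoeff_of_lt (by omega)]; simp
      | succ m =>
        have := ih k m (by omega)
        rw [eulerProd_succ, ← add_assoc]
        linear_combination (1 - X ^ (m + 1)) * this
    have hP : eulerProd (2 * (n + 1) + 1) =
        eulerProd (2 * n + 1) * (1 - X ^ (2 * n + 2)) * (1 - X ^ (2 * n + 3)) := by
      rw [show 2 * (n + 1) + 1 = 2 * n + 1 + 1 + 1 by ring, eulerProd_succ, eulerProd_succ]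
    intro k m h
    rw [hP]
    rcases k with _ | k
    · obtain rfl : m = n + 1 := by omega
      have h0 := ih 0 n (by omega)
      have h1 := ih' 1 n (by omega)
      simp only [mul_zero, zero_add, triTerm, mul_one] at h0 h1 ⊢
      rw [show 2 + n = n + 1 + 1 by ring, eulerProd_succ (n + 1)] at h1
      rw [eulerProd_succ (n + 1), eulerProd_succ n, jacCoeff]
      rw [eulerProd_succ n] at h0 h1
      linear_combination (1 + X ^ (n + 1) + X ^ (2 * n + 2)) * (1 - X ^ (n + 1)) *
        (1 - X ^ (n + 2)) * h0 - X ^ (n + 1) * (1 - X ^ (n + 1)) * h1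
    · rcases m with _ | m
      · obtain rfl : k = n := by omega
        have h0 := ih k 0 (by omega)
        rw [jacCoeff, jacCoeff_of_lt (show k < k + 1 by omega),
          jacCoeff_of_lt (show k < k + 2 by omega),
          show 2 * (k + 1) + 0 + 1 = 2 * k + 1 + 1 + 1 by ring, eulerProd_succ (2 * k + 1 + 1),
          eulerProd_succ (2 * k + 1), triTerm]
        rw [add_zero] at h0
        linear_combination (-X ^ (k + 1)) * (1 - X ^ (2 * k + 2)) * (1 - X ^ (2 * k + 3)) * h0
      · obtain rfl : n = k + m + 1 := by omega
        have h0 := ih k (m + 1) (by omega)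
        have h1 := ih (k + 1) m (by omega)
        have h2 := ih' (k + 2) m (by omega)
        have a1 : eulerProd (2 * k + (m + 1) + 1 + 1) =
            eulerProd (2 * k + (m + 1) + 1) * (1 - X ^ (2 * k + m + 3)) := by
          rw [eulerProd_succ]; ring_nf
        have a2 : eulerProd (2 * k + (m + 1) + 1 + 1 + 1) =
            eulerProd (2 * k + (m + 1) + 1 + 1) * (1 - X ^ (2 * k + m + 4)) := by
          rw [eulerProd_succ]; ring_nf
        rw [show 2 * (k + 1) + m + 1 = 2 * k + (m + 1) + 1 + 1 by ring, a1] at h1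
        rw [show 2 * (k + 2) + m = 2 * k + (m + 1) + 1 + 1 + 1 by ring, a2, a1] at h2
        rw [show 2 * (k + 1) + (m + 1) + 1 = 2 * k + (m + 1) + 1 + 1 + 1 by ring, a2, a1, jacCoeff]
        rw [eulerProd_succ m] at h0 ⊢
        simp only [triTerm] at h1 h2 ⊢
        linear_combination
          (1 + X ^ (2 * k + 2 * m + 4)) * (1 - X ^ (m + 1)) * (1 - X ^ (2 * k + m + 4)) * h1
          - X ^ (k + m + 2) * (1 - X ^ (2 * k + m + 3)) * (1 - X ^ (2 * k + m + 4)) * h0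
          - X ^ (k + m + 2) * (1 - X ^ (m + 1)) * h2

lemma eulerProd_sub_dvd {n m : ℕ} (h : n ≤ m) : X ^ (n + 1) ∣ eulerProd m - eulerProd n := by
  induction m, h using Nat.le_induction with
  | base => simp
  | succ m hm ih =>
    rw [eulerProd_succ, show eulerProd m * (1 - X ^ (m + 1)) - eulerProd n =
      (eulerProd m - eulerProd n) - X ^ (m + 1) * eulerProd m by ring]
    exact dvd_sub ih (Dvd.dvd.mul_right (pow_dvd_pow _ (by omega)) _)

/-- The finite products converge `X`-adically to `pentagonalSeries`. -/
lemma eulerProd_congr {n m : ℕ} (h : n ≤ m) : X ^ (n + 1) ∣ eulerProd m - pentagonalSeries ℤ := by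
  rw [X_pow_dvd_iff]
  intro d hd
  obtain ⟨s, hs⟩ := Filter.eventually_atTop.1 (coeff_prod_one_sub_X_pow_eventually_eq ℤ d)
  obtain ⟨M, hM⟩ := s.exists_nat_subset_range
  have h1 := hs (Finset.range (max M m)) (hM.trans (Finset.range_mono (le_max_left _ _)))
  have h2 := X_pow_dvd_iff.1 (eulerProd_sub_dvd (le_max_right M m)) d (by omega)
  rw [map_sub] at h2 ⊢
  rw [← h1]
  change _ - coeff d (eulerProd (max M m)) = 0
  omega

lemma jacCoeff_congr {n k m : ℕ} (h : k + m = n) :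
    X ^ (n + 1) ∣ pentagonalSeries ℤ * jacCoeff n k - triTerm k := by
  have hu : IsUnit (eulerProd m * eulerProd (2 * k + m + 1)) :=
    (isUnit_eulerProd _).mul (isUnit_eulerProd _)
  rw [← hu.dvd_mul_left]
  have h1 := jacCoeff_closed n k m h
  set f := pentagonalSeries ℤ
  have h2 : eulerProd m * eulerProd (2 * k + m + 1) * (f * jacCoeff n k - triTerm k) =
      triTerm k * ((eulerProd (2 * n + 1) - f) * f - (eulerProd m - f) * f -
        (eulerProd (2 * k + m + 1) - f) * eulerProd m) := by
    linear_combination f * h1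
  rw [h2, ← h, add_assoc, pow_add]
  refine mul_dvd_mul (X_pow_dvd_triTerm k) (dvd_sub (dvd_sub ?_ ?_) ?_) <;>
    exact Dvd.dvd.mul_right (eulerProd_congr (by omega)) _

/-- **Jacobi's identity** `f³ = ∑_{k ≥ 0} (-1)^k (2k+1) X^(k(k+1)/2)`. -/
theorem pentagonalSeries_cube :
    pentagonalSeries ℤ ^ 3 =
      thetaSum (fun k : ℕ => k * (k + 1) / 2) (fun k => (-1) ^ k * (2 * k + 1)) := by
  set f := pentagonalSeries ℤ with hf
  ext n
  have h1 : X ^ (n + 1) ∣ f ^ 3 - ∑ k ∈ Finset.range (n + 1), (2 * (k : ℤ⟦X⟧) + 1) * triTerm k := by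
    have h2 : f ^ 3 - ∑ k ∈ Finset.range (n + 1), (2 * (k : ℤ⟦X⟧) + 1) * triTerm k =
        ∑ k ∈ Finset.range (n + 1), (2 * (k : ℤ⟦X⟧) + 1) * (f * jacCoeff n k - triTerm k) -
          (eulerProd n - f) * (f * (eulerProd n + f)) := by
      have h3 := sum_jacCoeff n
      simp_rw [mul_sub, mul_left_comm _ f]
      rw [Finset.sum_sub_distrib, ← Finset.mul_sum, h3]
      ring
    rw [h2]
    refine dvd_sub (Finset.dvd_sum fun k hk => ?_) (Dvd.dvd.mul_right (eulerProd_congr le_rfl) _)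
    have : k < n + 1 := by simpa using hk
    exact Dvd.dvd.mul_left (jacCoeff_congr (m := n - k) (by omega)) _
  have h4 := X_pow_dvd_iff.1 h1 n (by omega)
  rw [map_sub, sub_eq_zero] at h4
  rw [h4, map_sum, coeff_thetaSum_of_subset (s := Finset.range (n + 1))]
  · refine Finset.sum_congr rfl fun k _ => ?_
    rw [triTerm_eq, show (2 * (k : ℤ⟦X⟧) + 1) = C (2 * (k : ℤ) + 1) by simp, ← mul_assoc,
      ← map_mul, coeff_C_mul, coeff_X_pow]
    simp only [eq_comm (a := n)]
    split_ifs <;> ring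
  · intro k hk
    have : k ≤ k * (k + 1) / 2 := by
      rw [Nat.le_div_iff_mul_le two_pos]
      rcases k with _ | k
      · simp
      · nlinarith
    simp only [Finset.mem_range]
    omega

/-! ### Vanishing coefficients of the tenth power of the Euler product -/

lemma finFib_triangular : FinFib (fun k : ℕ => k * (k + 1) / 2) := by
  intro n
  refine (Set.finite_Iic n).subset fun k hk => ?_
  simp only [Set.mem_ofPred_eq] at hk
  have : k ≤ k * (k + 1) / 2 := by
    rw [Nat.le_div_iff_mul_le two_pos]
    rcases k with _ | k
    · simp
    · nlinarith
  exact this.trans hk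

lemma chi_two_mul_add_one (k : ℕ) : chi (2 * k + 1) = (-1) ^ k := by
  rcases Nat.even_or_odd k with h | h
  · rw [h.neg_one_pow]
    obtain ⟨m, rfl⟩ := h
    exact if_pos (by push_cast; omega)
  · rw [h.neg_one_pow]
    obtain ⟨m, rfl⟩ := h
    rw [chi, if_neg (by push_cast; omega), if_pos (by push_cast; omega)]

/-- The terms `a` and `-a` of `jacobiTheta3` agree, so the series is twice its part with `a > 0`,
which Jacobi's identity evaluates. -/
lemma jacobiTheta3_eq :
    jacobiTheta3 = C 2 * (X ^ 3 * expand 24 (by norm_num) (pentagonalSeries ℤ ^ 3)) := by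
  have h3 := finFib_sqe (c := 3) three_ne_zero
  have hpos : thetaSum (sqe 3) (fun a => if 0 < a then chi a * a else 0) =
      X ^ 3 * expand 24 (by norm_num) (pentagonalSeries ℤ ^ 3) := by
    rw [pentagonalSeries_cube, X_pow_mul_expand_thetaSum finFib_triangular,
      thetaSum_comp_inj _ _ (fun k : ℕ => 2 * (k : ℤ) + 1)]
    · refine thetaSum_congr (fun k => ?_) fun k => ?_
      · have h : 2 * (k * (k + 1) / 2) = k * (k + 1) :=
          Nat.mul_div_cancel' (Nat.even_mul_succ_self k).two_dvd
        zify at h ⊢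
        rw [cast_sqe]
        push_cast
        linear_combination -12 * h
      · rw [if_pos (by omega), chi_two_mul_add_one]
    · intro a b h
      simp only at h
      omega
    · intro a ha
      have h1 : 0 < a := by
        by_contra hn
        exact ha (if_neg hn)
      rw [if_pos h1] at ha
      have h2 : a % 2 = 1 := by
        by_contra hn
        refine ha ?_
        rw [chi, if_neg (by omega), if_neg (by omega), zero_mul]
      exact ⟨((a - 1) / 2).toNat, by simp only; omega⟩
  have hneg : thetaSum (sqe 3) (fun a => if 0 < a then chi a * a else 0) =
      thetaSum (sqe 3) (fun a => if a < 0 then chi a * a else 0) := by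
    rw [thetaSum_comp_inj _ _ (fun a : ℤ => -a) neg_injective (fun i _ => ⟨-i, neg_neg i⟩)]
    refine thetaSum_congr (fun a => sqe_neg 3 a) fun a => ?_
    simp only [chi_neg, Left.neg_pos_iff, neg_mul_neg]
  rw [← hpos, map_ofNat, two_mul]
  nth_rw 2 [hneg]
  rw [← thetaSum_add h3, jacobiTheta3]
  refine thetaSum_congr (fun _ => rfl) fun a => ?_
  rcases lt_trichotomy a 0 with h | rfl | h
  · simp [h, h.le]
  · simp
  · simp [h, h.le]

lemma finFib_pentagonal : FinFib pentagonal := by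
  intro n
  refine (Set.finite_Icc (-(n : ℤ)) n).subset fun k hk => ?_
  have h := two_mul_natCast_pentagonal k
  have hk' : (pentagonal k : ℤ) ≤ n := by exact_mod_cast hk
  constructor
  · by_contra hn
    nlinarith
  · by_contra hn
    nlinarith

lemma pentagonalSeries_eq_thetaSum :
    pentagonalSeries ℤ = thetaSum pentagonal (fun m => if m % 2 = 0 then 1 else -1) := by
  ext n
  rw [coeff_thetaSum finFib_pentagonal _ le_rfl]
  by_cases hn : n ∈ Set.range pentagonal
  · obtain ⟨k, rfl⟩ := hn
    rw [coeff_pentagonalSeries_pentagonal, Finset.sum_eq_single k]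
    · rw [if_pos rfl]
      split_ifs with h
      · rw [Int.negOnePow_even k (Int.even_iff.2 h)]
        rfl
      · rw [Int.negOnePow_odd k (Int.odd_iff.2 (by omega))]
        rfl
    · intro b _ hb
      exact if_neg fun h => hb (pentagonal_injective h)
    · simp
  · rw [coeff_pentagonalSeries_eq_zero, Finset.sum_eq_zero]
    · intro i _
      exact if_neg fun h => hn ⟨i, h⟩
    · exact hn

lemma eulerTheta_eq : eulerTheta = X * expand 24 (by norm_num) (pentagonalSeries ℤ) := by
  rw [pentagonalSeries_eq_thetaSum, ← pow_one X, X_pow_mul_expand_thetaSum finFib_pentagonal,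
    eulerTheta]
  refine thetaSum_congr (fun m => ?_) fun _ => rfl
  have h := two_mul_natCast_pentagonal m
  zify
  rw [cast_sqe]
  push_cast
  linear_combination -12 * h

/-- The square of `eulerTheta` is cancelled from `six_jacobiTheta_pow_eq`. -/
lemma winquistTheta_eq :
    C 96 * (X ^ 10 * expand 24 (by norm_num) (pentagonalSeries ℤ ^ 10)) = winquistTheta := by
  have hf : eulerTheta ≠ 0 := by
    intro h
    have h1 := congrArg (coeff (24 * pentagonal 0 + 1)) h
    rw [eulerTheta_eq, coeff_succ_X_mul, coeff_expand_mul, coeff_pentagonalSeries_pentagonal] at h1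
    simp at h1
  have h := six_jacobiTheta_pow_eq
  refine mul_right_cancel₀ (mul_ne_zero hf hf) ?_
  rw [← h, jacobiTheta3_eq, eulerTheta_eq]
  simp only [map_pow, map_ofNat]
  ring

/-- The coefficients of `f¹⁰` vanish outside the exponents `N` with `24N + 10` a sum of two
squares. -/
theorem coeff_pentagonalSeries_pow_ten {N : ℕ} (hN : ¬ ∃ x y : ℕ, 24 * N + 10 = x ^ 2 + y ^ 2) :
    coeff N (pentagonalSeries ℤ ^ 10) = 0 := by
  have h := congrArg (coeff (24 * N + 10)) winquistTheta_eq
  rw [coeff_C_mul, coeff_X_pow_mul, coeff_expand_mul, winquistTheta,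
    coeff_thetaSum_of_subset (s := ∅)] at h
  · simpa using h
  · rintro ⟨u, v⟩ huv
    exact absurd ⟨u.natAbs, v.natAbs, by simpa [sqe] using huv.symm⟩ hN

/-! ### Regular multipartitions modulo eleven -/

open Nat.Partition in
/-- Splitting a multipartition into its vector of sizes and its components. -/
lemma B_eq_sum (l r n : ℕ) :
    B l r n = ∑ s ∈ Finset.piAntidiag (Finset.univ : Finset (Fin r)) n,
      ∏ i, (restricted (s i) (¬ l ∣ ·)).card := by
  have key : {f : Fin r → Σ a : Fin (n + 1), Nat.Partition a //
      (∑ i, ((f i).1 : ℕ)) = n ∧ ∀ i, ∀ part ∈ (f i).2.parts, ¬ l ∣ part} ≃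
      Σ s : {s : Fin r → ℕ // s ∈ Finset.piAntidiag Finset.univ n},
        ∀ i, {q : Nat.Partition (s.1 i) // q ∈ restricted (s.1 i) (¬ l ∣ ·)} :=
    { toFun := fun f => ⟨⟨fun i => (f.1 i).1, by simpa using f.2.1⟩,
        fun i => ⟨(f.1 i).2, by simpa [restricted] using f.2.2 i⟩⟩
      invFun := fun g => ⟨fun i => ⟨⟨g.1.1 i, by
          have h : ∑ i, g.1.1 i = n := (Finset.mem_piAntidiag.1 g.1.2).1
          have := Finset.single_le_sum (f := g.1.1) (fun _ _ => Nat.zero_le _) (Finset.mem_univ i)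
          omega⟩, (g.2 i).1⟩, (Finset.mem_piAntidiag.1 g.1.2).1,
          fun i => (Finset.mem_filter.1 (g.2 i).2).2⟩
      left_inv := fun f => rfl
      right_inv := fun g => rfl }
  rw [B, Fintype.card_congr key, Fintype.card_sigma]
  simp only [Fintype.card_pi, Fintype.card_coe]
  exact Finset.sum_coe_sort (Finset.piAntidiag (Finset.univ : Finset (Fin r)) n)
    (fun s => ∏ i, (restricted (s i) (¬ l ∣ ·)).card)

lemma coeff_pow_eq_sum_piAntidiag {R : Type*} [CommSemiring R] (g : R⟦X⟧) (r n : ℕ) :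
    coeff n (g ^ r) = ∑ s ∈ Finset.piAntidiag (Finset.univ : Finset (Fin r)) n,
      ∏ i, coeff (s i) g := by
  have h := coeff_prod (fun _ : Fin r => g) n Finset.univ
  rw [Finset.prod_const, Finset.card_univ, Fintype.card_fin] at h
  rw [h]
  refine Finset.sum_nbij' (fun s => ⇑s) (fun s => Finsupp.equivFunOnFinite.symm s) ?_ ?_ ?_ ?_ ?_
  · intro s hs
    simpa [Finset.mem_finsuppAntidiag] using hs
  · intro s hs
    simpa [Finset.mem_finsuppAntidiag] using hs
  · intro s _
    ext; rfl
  · intro s _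
    rfl
  · intro s _
    rfl

instance : Fact (Nat.Prime 11) := ⟨by norm_num⟩

/-- In characteristic `11` the polynomial `1 + Y + ⋯ + Y¹⁰` is `(1 - Y)¹⁰`. -/
lemma geom_sum_eleven (k : ℕ) :
    ∑ j ∈ Finset.range 11, (X : (ZMod 11)⟦X⟧) ^ ((k + 1) * j) = (1 - X ^ (k + 1)) ^ 10 := by
  have : CharP (ZMod 11)⟦X⟧ 11 :=
    charP_of_injective_ringHom (C_injective (R := ZMod 11)) 11
  have hne : (1 - X ^ (k + 1) : (ZMod 11)⟦X⟧) ≠ 0 := by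
    intro h
    have := congrArg (coeff 0) h
    simp at this
  refine mul_right_cancel₀ hne ?_
  simp_rw [pow_mul]
  rw [geom_sum_mul_neg, ← pow_succ, sub_pow_char (p := 11), one_pow]

open Nat.Partition PowerSeries.WithPiTopology in
/-- The generating function of `11`-regular partitions is `f¹⁰` modulo `11`. -/
lemma mk_restricted_eq :
    PowerSeries.mk (fun n => ((restricted n (¬ 11 ∣ ·)).card : ZMod 11)) =
      pentagonalSeries (ZMod 11) ^ 10 := by
  let : TopologicalSpace (ZMod 11) := ⊥
  have : DiscreteTopology (ZMod 11) := ⟨rfl⟩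
  rw [powerSeriesMk_card_restricted_eq_powerSeriesMk_card_countRestricted (ZMod 11)
    (show 0 < 11 by norm_num)]
  have h1 := hasProd_powerSeriesMk_card_countRestricted (ZMod 11) (show 0 < 11 by norm_num)
  have h2 := (hasProd_one_sub_X_pow (ZMod 11)).pow 10
  simp_rw [geom_sum_eleven] at h1
  exact h1.unique h2

lemma map_pentagonalSeries :
    PowerSeries.map (Int.castRingHom (ZMod 11)) (pentagonalSeries ℤ) =
      pentagonalSeries (ZMod 11) := by
  ext n
  rw [coeff_map]
  by_cases hn : n ∈ Set.range pentagonal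
  · obtain ⟨k, rfl⟩ := hn
    rw [coeff_pentagonalSeries_pentagonal, coeff_pentagonalSeries_pentagonal]
    simp
  · rw [coeff_pentagonalSeries_eq_zero _ hn, coeff_pentagonalSeries_eq_zero _ hn, map_zero]

lemma pow_eleven_eq_expand (g : (ZMod 11)⟦X⟧) : g ^ 11 = expand 11 (by norm_num) g := by
  have h := MvPowerSeries.map_frobenius_expand (R := ZMod 11) 11 (by norm_num) (f := g)
  rw [← h, ZMod.frobenius_zmod]
  simp [expand]

/-- `B_{11}^{(11)}(11N)` is congruent to the `N`-th coefficient of `f¹⁰`. -/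
theorem B_eleven_mul (N : ℕ) :
    (B 11 11 (11 * N) : ZMod 11) = ((coeff N (pentagonalSeries ℤ ^ 10) : ℤ) : ZMod 11) := by
  rw [← eq_intCast (Int.castRingHom (ZMod 11)), ← coeff_map, map_pow, map_pentagonalSeries,
    ← mk_restricted_eq, ← coeff_expand_mul 11 (by norm_num), ← pow_eleven_eq_expand,
    coeff_pow_eq_sum_piAntidiag, B_eq_sum]
  simp only [coeff_mk, Nat.cast_sum, Nat.cast_prod]

/-! ### Sums of two squares and the congruence -/

lemma sq_mod_twelve {p : ℕ} (hp : p.Prime) (hp3 : p ≠ 3) (hpm : p % 4 = 3) : p ^ 2 % 12 = 1 := by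
  have h3 : p % 3 ≠ 0 := fun h =>
    hp3 ((Nat.prime_dvd_prime_iff_eq Nat.prime_three hp).1 (Nat.dvd_of_mod_eq_zero h)).symm
  have h : p % 12 = 7 ∨ p % 12 = 11 := by omega
  rcases h with h | h <;> simp [Nat.pow_mod, h]

/-- A number `2R²pm` with `p ≡ 3 (mod 4)` prime and `p ∤ m` has odd `p`-adic valuation, hence is
not a sum of two squares. -/
lemma not_sum_two_squares {p R m : ℕ} (hp : p.Prime) (hpm : p % 4 = 3) (hR : R ≠ 0)
    (hm : ¬ p ∣ m) : ¬ ∃ x y : ℕ, 2 * (R ^ 2 * p * m) = x ^ 2 + y ^ 2 := by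
  have : Fact p.Prime := ⟨hp⟩
  have hm0 : m ≠ 0 := fun h => hm (by simp [h])
  have hR2 : R ^ 2 ≠ 0 := pow_ne_zero 2 hR
  have h2 : ¬ p ∣ 2 := fun h => by
    have := (Nat.prime_dvd_prime_iff_eq hp Nat.prime_two).1 h
    omega
  have h0 : 2 * (R ^ 2 * p * m) ≠ 0 := by
    simp [hR, hp.ne_zero, hm0]
  rw [Nat.eq_sq_add_sq_iff]
  intro h
  have hv := h p (Nat.mem_primeFactors.2 ⟨hp, ⟨2 * (R ^ 2 * m), by ring⟩, h0⟩) hpm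
  rw [padicValNat.mul two_ne_zero (right_ne_zero_of_mul h0),
    padicValNat.mul (mul_ne_zero hR2 hp.ne_zero) hm0, padicValNat.mul hR2 hp.ne_zero,
    padicValNat.pow, padicValNat_self, padicValNat.eq_zero_of_not_dvd h2,
    padicValNat.eq_zero_of_not_dvd hm] at hv
  grind

theorem stmt_4 (t : ℕ) (p : Fin (t + 1) → ℕ)
    (hp : ∀ i, Nat.Prime (p i)) (hp3 : ∀ i, p i ≠ 3) (hp11 : ∀ i, p i ≠ 11)
    (hpm : ∀ i, p i % 4 = 3)
    (n j : ℕ) (hj : 0 < j) (hjd : ¬ p (Fin.last t) ∣ j) :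
    B 11 11 (11 * (∏ i, (p i) ^ 2) * n +
      11 * (((∏ i : Fin t, (p i.castSucc) ^ 2) * p (Fin.last t) *
        (5 * p (Fin.last t) + 12 * j) - 5) / 12)) ≡ 0 [MOD 11] := by
  rw [Fin.prod_univ_castSucc, Finset.prod_pow]
  have hR0 : ∏ i : Fin t, p i.castSucc ≠ 0 := Finset.prod_ne_zero_iff.2 fun i _ => (hp _).ne_zero
  have hRmod : (∏ i : Fin t, p i.castSucc) ^ 2 % 12 = 1 := by
    rw [← Finset.prod_pow]
    refine Finset.prod_induction _ (· % 12 = 1) (fun a b ha hb => ?_) rfl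
      fun i _ => sq_mod_twelve (hp _) (hp3 _) (hpm _)
    simp [Nat.mul_mod, ha, hb]
  set R := ∏ i : Fin t, p i.castSucc
  have hq := hp (Fin.last t)
  have hq3 := hp3 (Fin.last t)
  have hqm := hpm (Fin.last t)
  set q := p (Fin.last t)
  have hmod : R ^ 2 * q * (5 * q + 12 * j) % 12 = 5 := by
    have h1 : R ^ 2 * q ^ 2 % 12 = 1 := by
      rw [Nat.mul_mod, hRmod, sq_mod_twelve hq hq3 hqm]
    rw [show R ^ 2 * q * (5 * q + 12 * j) = 5 * (R ^ 2 * q ^ 2) + 12 * (R ^ 2 * q * j) by ring]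
    omega
  obtain ⟨N₀, hN₀⟩ : ∃ N₀, R ^ 2 * q * (5 * q + 12 * j) = 12 * N₀ + 5 :=
    ⟨R ^ 2 * q * (5 * q + 12 * j) / 12, by omega⟩
  rw [show (R ^ 2 * q * (5 * q + 12 * j) - 5) / 12 = N₀ by omega,
    show 11 * (R ^ 2 * q ^ 2) * n + 11 * N₀ = 11 * (R ^ 2 * q ^ 2 * n + N₀) by ring,
    ← ZMod.natCast_eq_natCast_iff, B_eleven_mul, coeff_pentagonalSeries_pow_ten]
  · simp
  -- the index is `11N` with `N = R² q² n + N₀`, and `24N + 10 = 2 R² q (12qn + 5q + 12j)`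
  rw [show 24 * (R ^ 2 * q ^ 2 * n + N₀) + 10 = 2 * (R ^ 2 * q * (12 * q * n + 5 * q + 12 * j)) by
    have h := hN₀
    zify at h ⊢
    linear_combination -2 * h]
  refine not_sum_two_squares hq hqm hR0 fun h => ?_
  have h12 : q ∣ 12 * j := by
    rw [show 12 * q * n + 5 * q + 12 * j = q * (12 * n + 5) + 12 * j by ring] at h
    exact (Nat.dvd_add_right (dvd_mul_right _ _)).1 h
  have h2 : ¬ q ∣ 2 ^ 2 := fun h => by
    have := (Nat.prime_dvd_prime_iff_eq hq Nat.prime_two).1 (hq.dvd_of_dvd_pow h)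
    omega
  have h3 : ¬ q ∣ 3 := fun h => hq3 ((Nat.prime_dvd_prime_iff_eq hq Nat.prime_three).1 h)
  rw [show 12 * j = 2 ^ 2 * (3 * j) by ring, hq.dvd_mul, hq.dvd_mul] at h12
  tauto
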